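/- arXiv:1704.03542 — 2 statements merged into one kernel-verified Lean document; each statement's English description precedes it below -/
import Mathlib

section
/- Let n ≥ 2, let 0 < γ₁, γ₂ < 1, let Π = I₁ × I₂ be a rectangle with midpoint d = (d₁, d₂), d₁ ≠ d₂, and side lengths μ₁I_i = c₆ Q^{−γ_i} (i = 1, 2), where μ₁ denotes one-dimensional Lebesgue measure. Set c₇ = 2^{3n+8} n² ρₙ(d₁) ρₙ(d₂) |d₁ − d₂|^{−1}. Then for all sufficiently large Q (Q > Q₀(n, γ, d)) one has #(Ã²ₙ(Q) ∩ Π) < c₇ · Qⁿ · μ₂Π, where μ₂Π = c₆² Q^{−γ₁−γ₂} is the area of Π. -/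
/-- `(α₁, α₂)` is an algebraic integer point of degree `n` and height at most `Q`:
`α₁, α₂` are real roots of a common monic irreducible integer polynomial of degree `n`
all of whose coefficients are bounded by `Q` in absolute value. -/
def IsAlgebraicIntegerPoint (n : ℕ) (Q : ℝ) (α : ℝ × ℝ) : Prop :=
  ∃ P : Polynomial ℤ, P.Monic ∧ Irreducible P ∧ P.natDegree = n ∧
    (∀ i, (|P.coeff i| : ℝ) ≤ Q) ∧
    Polynomial.aeval α.1 P = 0 ∧ Polynomial.aeval α.2 P = 0

/-!
If `α` is a root of `P` close to `d`, then `P(d) = P(d) - P(α)` is small, of size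
`O(n ρₙ(d) Q |d - α|)`. So each point counted consists of roots of a polynomial `P` with `P(d₁)` and
`P(d₂)` both small. Once the coefficients of `P` in degrees at least two are fixed (at most
`(2Q + 1)ⁿ⁻²` choices), these two conditions confine the remaining coefficients `(a₁, a₀)` to a
parallelogram whose area is of order `Q² μ₂Π / |d₁ - d₂|`, and which is wide enough to have
`O(area)` lattice points. Each polynomial accounts for at most `n²` points.
-/

open Filter Polynomial Set

section BoundedCard

variable {α β : Type*} {s t : Set α} {K L : ℝ}

/-- The set `s` is finite and has at most `K` elements. Finiteness is part of the notion because
`Set.ncard` is `0` on infinite sets; the bound is real so that volume estimates can be used. -/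
def CardLE (s : Set α) (K : ℝ) : Prop :=
  s.Finite ∧ (s.ncard : ℝ) ≤ K

namespace CardLE

lemma mono_right (h : CardLE s K) (hKL : K ≤ L) : CardLE s L :=
  ⟨h.1, h.2.trans hKL⟩

lemma subset (h : CardLE t K) (hst : s ⊆ t) : CardLE s K :=
  ⟨h.1.subset hst, (Nat.cast_le.mpr (ncard_le_ncard hst h.1)).trans h.2⟩

lemma of_injOn {t : Set β} {f : α → β} (h : CardLE t K) (hf : MapsTo f s t) (hinj : InjOn f s) :
    CardLE s K :=
  ⟨h.1.of_injOn hf hinj, (Nat.cast_le.mpr (ncard_le_ncard_of_injOn f hf hinj h.1)).trans h.2⟩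

lemma biUnion {f : α → Set β} (ht : CardLE t K) (hL : 0 ≤ L) (hf : ∀ a ∈ t, CardLE (f a) L) :
    CardLE (⋃ a ∈ t, f a) (K * L) := by
  obtain ⟨ht_fin, ht_card⟩ := ht
  lift t to Finset α using ht_fin
  rw [ncard_coe_finset] at ht_card
  refine ⟨t.finite_toSet.biUnion fun _ ha => (hf _ ha).1, ?_⟩
  calc ((⋃ a ∈ t, f a).ncard : ℝ)
      ≤ ∑ a ∈ t, ((f a).ncard : ℝ) := mod_cast t.set_ncard_biUnion_le f
    _ ≤ ∑ _a ∈ t, L := Finset.sum_le_sum fun a ha => (hf a ha).2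
    _ = t.card * L := by rw [Finset.sum_const, nsmul_eq_mul]
    _ ≤ K * L := by gcongr

lemma of_fibers {t : Set β} {f : α → β} (ht : CardLE t K) (hL : 0 ≤ L) (hf : MapsTo f s t)
    (hfib : ∀ b ∈ t, CardLE (s ∩ f ⁻¹' {b}) L) : CardLE s (K * L) :=
  (ht.biUnion hL hfib).subset fun _ ha => mem_biUnion (hf ha) ⟨ha, rfl⟩

end CardLE

end BoundedCard

section LatticePoints

variable {d₁ d₂ c₁ c₂ M₁ M₂ : ℝ}

lemma cardLE_int_abs_add_le (c : ℝ) {r : ℝ} (hr : 0 ≤ r) :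
    CardLE {x : ℤ | |(x : ℝ) + c| ≤ r} (2 * r + 1) := by
  have h_eq : {x : ℤ | |(x : ℝ) + c| ≤ r} = Finset.Icc ⌈-c - r⌉ ⌊-c + r⌋ := by
    ext x
    rw [Finset.coe_Icc, ← Int.preimage_Icc, mem_preimage, mem_ofPred_eq, abs_le, mem_Icc]
    constructor <;> rintro ⟨_, _⟩ <;> constructor <;> linarith
  rw [h_eq]
  refine ⟨Finset.finite_toSet _, ?_⟩
  rw [ncard_coe_finset, Int.card_Icc]
  calc (((⌊-c + r⌋ + 1 - ⌈-c - r⌉).toNat : ℤ) : ℝ)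
      = max ((⌊-c + r⌋ : ℝ) + 1 - ⌈-c - r⌉) 0 := by rw [Int.toNat_eq_max]; push_cast; rfl
    _ ≤ 2 * r + 1 :=
        max_le (by linarith [Int.floor_le (-c + r), Int.le_ceil (-c - r)]) (by linarith)

/-- The pairs `(a₁, a₀)` of integers for which the affine forms `a₀ + a₁ dᵢ + cᵢ` are bounded by
`Mᵢ`: the lattice points of a parallelogram of area `4 M₁ M₂ / |d₁ - d₂|`. -/
def latticeParallelogram (d₁ c₁ M₁ d₂ c₂ M₂ : ℝ) : Set (ℤ × ℤ) :=
  {a | |(a.2 : ℝ) + (a.1 * d₁ + c₁)| ≤ M₁ ∧ |(a.2 : ℝ) + (a.1 * d₂ + c₂)| ≤ M₂}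

lemma latticeParallelogram_swap :
    latticeParallelogram d₁ c₁ M₁ d₂ c₂ M₂ = latticeParallelogram d₂ c₂ M₂ d₁ c₁ M₁ :=
  Set.ext fun _ => and_comm

lemma abs_fst_add_le_of_mem_latticeParallelogram (hd : d₁ ≠ d₂) {a : ℤ × ℤ}
    (ha : a ∈ latticeParallelogram d₁ c₁ M₁ d₂ c₂ M₂) :
    |(a.1 : ℝ) + (c₁ - c₂) / (d₁ - d₂)| ≤ (M₁ + M₂) / |d₁ - d₂| := by
  have hd_sub : d₁ - d₂ ≠ 0 := sub_ne_zero.mpr hd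
  rw [le_div_iff₀ (abs_pos.mpr hd_sub), ← abs_mul, add_mul, div_mul_cancel₀ _ hd_sub]
  calc |(a.1 : ℝ) * (d₁ - d₂) + (c₁ - c₂)|
      = |((a.2 : ℝ) + (a.1 * d₁ + c₁)) - ((a.2 : ℝ) + (a.1 * d₂ + c₂))| := by ring_nf
    _ ≤ M₁ + M₂ := (abs_sub _ _).trans (add_le_add ha.1 ha.2)

lemma cardLE_latticeParallelogram (c₁ c₂ : ℝ) (hd : d₁ ≠ d₂) (hM₁ : 0 ≤ M₁) (hM₂ : 0 ≤ M₂) :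
    CardLE (latticeParallelogram d₁ c₁ M₁ d₂ c₂ M₂)
      ((2 * ((M₁ + M₂) / |d₁ - d₂|) + 1) * (2 * M₁ + 1)) := by
  refine (cardLE_int_abs_add_le ((c₁ - c₂) / (d₁ - d₂)) (by positivity)).of_fibers
    (by positivity) (fun _ ha => abs_fst_add_le_of_mem_latticeParallelogram hd ha) fun x _ => ?_
  refine (cardLE_int_abs_add_le (x * d₁ + c₁) hM₁).of_injOn (f := Prod.snd) ?_ ?_
  · rintro a ⟨ha, rfl⟩
    exact ha.1
  · rintro a ⟨-, ha⟩ b ⟨-, hb⟩ hab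
    exact Prod.ext (ha.trans hb.symm) hab

lemma cardLE_latticeParallelogram_of_wide (c₁ c₂ : ℝ) (hd : d₁ ≠ d₂) (hM₁ : 1 / 2 ≤ M₁)
    (hM₂ : 1 / 2 ≤ M₂) (hM : |d₁ - d₂| ≤ 2 * (M₁ + M₂)) :
    CardLE (latticeParallelogram d₁ c₁ M₁ d₂ c₂ M₂) (32 * (M₁ * M₂) / |d₁ - d₂|) := by
  wlog h_le : M₁ ≤ M₂ generalizing d₁ d₂ c₁ c₂ M₁ M₂
  · rw [latticeParallelogram_swap, abs_sub_comm, mul_comm M₁]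
    exact this c₂ c₁ hd.symm hM₂ hM₁ (by rwa [abs_sub_comm, add_comm]) (le_of_not_ge h_le)
  have hD : 0 < |d₁ - d₂| := abs_pos.mpr (sub_ne_zero.mpr hd)
  refine (cardLE_latticeParallelogram c₁ c₂ hd (by linarith) (by linarith)).mono_right ?_
  have h_one : 1 ≤ 2 * ((M₁ + M₂) / |d₁ - d₂|) := by
    rwa [← mul_div_assoc, one_le_div hD]
  calc (2 * ((M₁ + M₂) / |d₁ - d₂|) + 1) * (2 * M₁ + 1)
      ≤ (2 * ((M₁ + M₂) / |d₁ - d₂|) + 2 * ((M₁ + M₂) / |d₁ - d₂|)) * (2 * M₁ + 2 * M₁) := by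
        gcongr; linarith
    _ ≤ (2 * ((M₂ + M₂) / |d₁ - d₂|) + 2 * ((M₂ + M₂) / |d₁ - d₂|)) * (2 * M₁ + 2 * M₁) := by
        gcongr
    _ = 32 * (M₁ * M₂) / |d₁ - d₂| := by ring

end LatticePoints

section MonicPolynomials

variable {n : ℕ} {Q : ℝ} {P : ℤ[X]}

/-- The monic integer polynomials of degree `n` and height at most `Q`. -/
def monicOfHeightLE (n : ℕ) (Q : ℝ) : Set ℤ[X] :=
  {P | P.Monic ∧ P.natDegree = n ∧ ∀ i, |(P.coeff i : ℝ)| ≤ Q}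

lemma divX_mem_monicOfHeightLE (hP : P ∈ monicOfHeightLE (n + 1) Q) :
    P.divX ∈ monicOfHeightLE n Q := by
  obtain ⟨h_monic, h_deg, h_coeff⟩ := hP
  have h_deg' : P.divX.natDegree = n := by
    rw [natDegree_divX_eq_natDegree_tsub_one, h_deg, Nat.add_sub_cancel]
  refine ⟨?_, h_deg', fun i => ?_⟩
  · rw [Monic, leadingCoeff, h_deg', coeff_divX, ← h_deg, coeff_natDegree, h_monic.leadingCoeff]
  · rw [coeff_divX]
    exact h_coeff (i + 1)

lemma cardLE_monicOfHeightLE (n : ℕ) (hQ : 0 ≤ Q) :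
    CardLE (monicOfHeightLE n Q) ((2 * Q + 1) ^ n) := by
  induction n with
  | zero =>
    have h_sub : monicOfHeightLE 0 Q ⊆ {1} := fun P hP => hP.1.natDegree_eq_zero.mp hP.2.1
    exact CardLE.subset ⟨finite_singleton _, by simp⟩ h_sub
  | succ n ih =>
    rw [pow_succ]
    refine ih.of_fibers (by positivity) (fun P hP => divX_mem_monicOfHeightLE hP) fun U _ => ?_
    refine (cardLE_int_abs_add_le 0 hQ).of_injOn (f := fun P => P.coeff 0) ?_ ?_
    · rintro P ⟨hP, -⟩
      simpa using hP.2.2 0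
    · rintro P ⟨-, hP⟩ R ⟨-, hR⟩ (h_coeff : P.coeff 0 = R.coeff 0)
      have h_divX : P.divX = R.divX := hP.trans hR.symm
      rw [← divX_mul_X_add P, ← divX_mul_X_add R, h_divX, h_coeff]

lemma divX_divX_mul_X_add {R : Type*} [Semiring R] (P : R[X]) :
    (P.divX.divX * X + C (P.coeff 1)) * X + C (P.coeff 0) = P := by
  have h_coeff : P.coeff 1 = P.divX.coeff 0 := (coeff_divX ..).symm
  rw [h_coeff, divX_mul_X_add, divX_mul_X_add]

lemma aeval_eq_coeff_zero_add {A : Type*} [CommRing A] (P : ℤ[X]) (x : A) :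
    aeval x P = P.coeff 0 + (P.coeff 1 * x + aeval x P.divX.divX * x ^ 2) := by
  conv_lhs => rw [← divX_divX_mul_X_add P]
  simp only [map_add, map_mul, aeval_X, eq_intCast, map_intCast]
  ring

variable {d₁ d₂ M₁ M₂ : ℝ}

lemma cardLE_monicOfHeightLE_abs_aeval_le (m : ℕ) (hQ : 1 / 2 ≤ Q) (hd : d₁ ≠ d₂)
    (hM₁ : 1 / 2 ≤ M₁) (hM₂ : 1 / 2 ≤ M₂) (hM : |d₁ - d₂| ≤ 2 * (M₁ + M₂)) :
    CardLE {P ∈ monicOfHeightLE (m + 2) Q | |aeval d₁ P| ≤ M₁ ∧ |aeval d₂ P| ≤ M₂}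
      ((4 * Q) ^ m * (32 * (M₁ * M₂) / |d₁ - d₂|)) := by
  have h_upper : CardLE (monicOfHeightLE m Q) ((4 * Q) ^ m) :=
    (cardLE_monicOfHeightLE m (by linarith)).mono_right (by gcongr; linarith)
  refine h_upper.of_fibers (f := fun P => P.divX.divX) (by positivity)
    (fun P hP => divX_mem_monicOfHeightLE (divX_mem_monicOfHeightLE hP.1)) fun U _ => ?_
  refine (cardLE_latticeParallelogram_of_wide (aeval d₁ U * d₁ ^ 2) (aeval d₂ U * d₂ ^ 2)
    hd hM₁ hM₂ hM).of_injOn (f := fun P => (P.coeff 1, P.coeff 0)) ?_ ?_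
  · rintro P ⟨⟨-, hP₁, hP₂⟩, rfl⟩
    rw [aeval_eq_coeff_zero_add] at hP₁ hP₂
    exact ⟨hP₁, hP₂⟩
  · rintro P ⟨-, hP⟩ R ⟨-, hR⟩ h_coeff
    obtain ⟨h_one, h_zero⟩ := Prod.mk.inj h_coeff
    have h_divX : P.divX.divX = R.divX.divX := hP.trans hR.symm
    rw [← divX_divX_mul_X_add P, ← divX_divX_mul_X_add R, h_divX, h_one, h_zero]

end MonicPolynomials

section ValueNearRoot

/-- The paper's `ρₙ(x) = ((|x| + 1)ⁿ⁺¹ - 1) / |x|`, written as a geometric sum so that it is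
meaningful at `x = 0` as well. -/
noncomputable def rho (n : ℕ) (x : ℝ) : ℝ :=
  ∑ i ∈ Finset.range (n + 1), (|x| + 1) ^ i

lemma rho_eq_div (n : ℕ) {x : ℝ} (hx : x ≠ 0) : rho n x = ((|x| + 1) ^ (n + 1) - 1) / |x| := by
  rw [rho, geom_sum_eq (by simpa using hx), add_sub_cancel_right]

lemma one_le_rho (n : ℕ) (x : ℝ) : 1 ≤ rho n x := by
  rw [rho, Finset.sum_range_succ', pow_zero]
  exact le_add_of_nonneg_left (by positivity)

lemma abs_pow_sub_pow_le_of_abs_sub_le_one {R : Type*} [CommRing R] [LinearOrder R]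
    [IsStrictOrderedRing R] {x y : R} (hxy : |x - y| ≤ 1) (i : ℕ) :
    |x ^ i - y ^ i| ≤ |x - y| * i * (|x| + 1) ^ i := by
  have h_max : max |x| |y| ≤ |x| + 1 := by
    have := abs_sub_abs_le_abs_sub y x
    rw [abs_sub_comm] at this
    exact max_le (by linarith) (by linarith)
  calc |x ^ i - y ^ i|
      ≤ |x - y| * i * max |x| |y| ^ (i - 1) := abs_pow_sub_pow_le ..
    _ ≤ |x - y| * i * (|x| + 1) ^ (i - 1) := by gcongr
    _ ≤ |x - y| * i * (|x| + 1) ^ i := by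
        gcongr
        · linarith [abs_nonneg x]
        · exact Nat.sub_le i 1

lemma abs_eval_sub_eval_le {n : ℕ} {Q x y : ℝ} {P : ℝ[X]} (h_deg : P.natDegree ≤ n)
    (h_coeff : ∀ i, |P.coeff i| ≤ Q) (hxy : |x - y| ≤ 1) :
    |P.eval x - P.eval y| ≤ n * rho n x * Q * |x - y| := by
  have hQ : 0 ≤ Q := (abs_nonneg _).trans (h_coeff 0)
  have h_lt : P.natDegree < n + 1 := Nat.lt_succ_of_le h_deg
  calc |P.eval x - P.eval y|
      = |∑ i ∈ Finset.range (n + 1), P.coeff i * (x ^ i - y ^ i)| := by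
        simp only [eval_eq_sum_range' h_lt, mul_sub, Finset.sum_sub_distrib]
    _ ≤ ∑ i ∈ Finset.range (n + 1), |P.coeff i * (x ^ i - y ^ i)| := Finset.abs_sum_le_sum_abs ..
    _ ≤ ∑ i ∈ Finset.range (n + 1), Q * (|x - y| * n * (|x| + 1) ^ i) := by
        refine Finset.sum_le_sum fun i hi => ?_
        have hi_le : (i : ℝ) ≤ n := mod_cast Finset.mem_range_succ_iff.mp hi
        rw [abs_mul]
        gcongr
        · exact h_coeff i
        · exact (abs_pow_sub_pow_le_of_abs_sub_le_one hxy i).trans (by gcongr)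
    _ = n * rho n x * Q * |x - y| := by
        rw [← Finset.mul_sum, ← Finset.mul_sum, ← rho]
        ring

lemma abs_aeval_le_of_aeval_eq_zero {n : ℕ} {Q d δ x : ℝ} {P : ℤ[X]}
    (hP : P ∈ monicOfHeightLE n Q) (hx : aeval x P = 0) (hδ : δ ≤ 1)
    (hxd : x ∈ Icc (d - δ) (d + δ)) : |aeval d P| ≤ n * rho n d * Q * δ := by
  have h_dist : |d - x| ≤ δ := mem_Icc_iff_abs_le.mpr hxd
  have hQ : 0 ≤ Q := (abs_nonneg _).trans (hP.2.2 0)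
  have hρ : 0 ≤ rho n d := zero_le_one.trans (one_le_rho n d)
  have h_lip := abs_eval_sub_eval_le (P := P.map (algebraMap ℤ ℝ))
    (natDegree_map_le.trans hP.2.1.le) (by simpa using hP.2.2) (h_dist.trans hδ)
  rw [eval_map_algebraMap, eval_map_algebraMap, hx, sub_zero] at h_lip
  exact h_lip.trans (by gcongr)

end ValueNearRoot

section RootPairs

/-- The pairs of real roots of a common monic integer polynomial of degree `n` and height at most
`Q`, which need not be irreducible. -/
def monicRootPairs (n : ℕ) (Q : ℝ) : Set (ℝ × ℝ) :=
  {α | ∃ P ∈ monicOfHeightLE n Q, aeval α.1 P = 0 ∧ aeval α.2 P = 0}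

lemma IsAlgebraicIntegerPoint.mem_monicRootPairs {n : ℕ} {Q : ℝ} {α : ℝ × ℝ}
    (hα : IsAlgebraicIntegerPoint n Q α) : α ∈ monicRootPairs n Q := by
  obtain ⟨P, h_monic, -, h_deg, h_coeff, h_roots⟩ := hα
  exact ⟨P, ⟨h_monic, h_deg, h_coeff⟩, h_roots⟩

lemma cardLE_rootSet_prod_rootSet {A : Type*} (B : Type*) [CommRing A] [CommRing B] [IsDomain B]
    [Algebra A B] (P : A[X]) :
    CardLE (P.rootSet B ×ˢ P.rootSet B) ((P.natDegree : ℝ) ^ 2) := by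
  have h_card := ncard_rootSet_le P B
  refine ⟨(rootSet_finite P B).prod (rootSet_finite P B), ?_⟩
  rw [ncard_prod, ← sq]
  exact mod_cast Nat.pow_le_pow_left h_card 2

variable {n : ℕ} {Q d₁ d₂ ℓ₁ ℓ₂ : ℝ}

lemma monicRootPairs_inter_prod_subset (hℓ₁ : ℓ₁ ≤ 2) (hℓ₂ : ℓ₂ ≤ 2) :
    monicRootPairs n Q ∩
        Icc (d₁ - ℓ₁ / 2) (d₁ + ℓ₁ / 2) ×ˢ Icc (d₂ - ℓ₂ / 2) (d₂ + ℓ₂ / 2) ⊆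
      ⋃ P ∈ {P ∈ monicOfHeightLE n Q | |aeval d₁ P| ≤ n * rho n d₁ * Q * (ℓ₁ / 2) ∧
        |aeval d₂ P| ≤ n * rho n d₂ * Q * (ℓ₂ / 2)}, P.rootSet ℝ ×ˢ P.rootSet ℝ := by
  rintro α ⟨⟨P, hP, h_root₁, h_root₂⟩, hα₁, hα₂⟩
  refine mem_biUnion ⟨hP, ?_, ?_⟩ ⟨?_, ?_⟩
  · exact abs_aeval_le_of_aeval_eq_zero hP h_root₁ (by linarith) hα₁
  · exact abs_aeval_le_of_aeval_eq_zero hP h_root₂ (by linarith) hα₂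
  · exact mem_rootSet.mpr ⟨hP.1.ne_zero, h_root₁⟩
  · exact mem_rootSet.mpr ⟨hP.1.ne_zero, h_root₂⟩

lemma le_mul_rho_mul_half (hn : 2 ≤ n) (d : ℝ) {ℓ : ℝ} (hQℓ : 0 ≤ Q * ℓ) :
    Q * ℓ ≤ n * rho n d * Q * (ℓ / 2) := by
  have hn' : (2 : ℝ) ≤ n := mod_cast hn
  calc Q * ℓ = 2 * 1 * (Q * ℓ) / 2 := by ring
    _ ≤ n * rho n d * (Q * ℓ) / 2 := by gcongr; exact one_le_rho n d
    _ = n * rho n d * Q * (ℓ / 2) := by ring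

lemma cardLE_monicRootPairs_inter_prod (hn : 2 ≤ n) (hQ : 1 / 2 ≤ Q) (hd : d₁ ≠ d₂)
    (hℓ₁ : ℓ₁ ≤ 2) (hℓ₂ : ℓ₂ ≤ 2) (hQℓ₁ : 1 / 2 ≤ Q * ℓ₁) (hQℓ₂ : 1 / 2 ≤ Q * ℓ₂)
    (hD : |d₁ - d₂| ≤ 2 * (Q * ℓ₁ + Q * ℓ₂)) :
    CardLE (monicRootPairs n Q ∩
        Icc (d₁ - ℓ₁ / 2) (d₁ + ℓ₁ / 2) ×ˢ Icc (d₂ - ℓ₂ / 2) (d₂ + ℓ₂ / 2))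
      (4 ^ n * n ^ 4 / 2 * rho n d₁ * rho n d₂ * |d₁ - d₂|⁻¹ * Q ^ n * (ℓ₁ * ℓ₂)) := by
  obtain ⟨m, rfl⟩ : ∃ m, n = m + 2 := ⟨n - 2, by omega⟩
  have hM₁ := le_mul_rho_mul_half hn d₁ (by linarith : 0 ≤ Q * ℓ₁)
  have hM₂ := le_mul_rho_mul_half hn d₂ (by linarith : 0 ≤ Q * ℓ₂)
  have h_poly := cardLE_monicOfHeightLE_abs_aeval_le m hQ hd (hQℓ₁.trans hM₁) (hQℓ₂.trans hM₂)
    (by linarith)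
  refine ((h_poly.biUnion (L := ((m + 2 : ℕ) : ℝ) ^ 2) (by positivity) fun P hP => ?_).subset
    (monicRootPairs_inter_prod_subset hℓ₁ hℓ₂)).mono_right (le_of_eq ?_)
  · rw [← hP.1.2.1]
    exact cardLE_rootSet_prod_rootSet ℝ P
  · rw [mul_pow]
    ring

end RootPairs

lemma sq_lt_two_pow_add_two (n : ℕ) : n ^ 2 < 2 ^ (n + 2) := by
  suffices n ^ 2 + 2 * n + 3 ≤ 2 ^ (n + 2) by omega
  induction n with
  | zero => norm_num
  | succ k ih =>
    calc (k + 1) ^ 2 + 2 * (k + 1) + 3 ≤ 2 * (k ^ 2 + 2 * k + 3) := by nlinarith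
      _ ≤ 2 * 2 ^ (k + 2) := by gcongr
      _ = 2 ^ (k + 1 + 2) := by ring

lemma four_pow_mul_pow_four_lt {n : ℕ} (hn : n ≠ 0) :
    (4 ^ n * n ^ 4 / 2 : ℝ) < 2 ^ (3 * n + 8) * n ^ 2 := by
  have h_sq : (n ^ 2 : ℝ) < 2 ^ (n + 2) := mod_cast sq_lt_two_pow_add_two n
  calc (4 ^ n * n ^ 4 / 2 : ℝ) ≤ 2 ^ (2 * n) * n ^ 2 * n ^ 2 := by
        rw [pow_mul, show (2 : ℝ) ^ 2 = 4 by norm_num]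
        have : (0 : ℝ) ≤ 4 ^ n * n ^ 4 := by positivity
        linarith
    _ < 2 ^ (2 * n) * n ^ 2 * 2 ^ (n + 2) := by gcongr
    _ ≤ 2 ^ (2 * n) * n ^ 2 * 2 ^ (n + 8) := by gcongr <;> norm_num
    _ = 2 ^ (3 * n + 8) * n ^ 2 := by ring

section PowerSides

variable {γ : ℝ}

lemma eventually_const_mul_rpow_neg_le_two (c : ℝ) (hγ : 0 < γ) :
    ∀ᶠ Q : ℝ in atTop, c * Q ^ (-γ) ≤ 2 := by
  have h_lim : Tendsto (fun Q : ℝ => c * Q ^ (-γ)) atTop (nhds (c * 0)) :=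
    (tendsto_rpow_neg_atTop hγ).const_mul c
  exact h_lim.eventually_le_const (by norm_num)

lemma tendsto_mul_const_mul_rpow_neg_atTop {c : ℝ} (hc : 0 < c) (hγ : γ < 1) :
    Tendsto (fun Q : ℝ => Q * (c * Q ^ (-γ))) atTop atTop := by
  have h_lim : Tendsto (fun Q : ℝ => c * Q ^ (1 - γ)) atTop atTop :=
    (tendsto_rpow_atTop (sub_pos.mpr hγ)).const_mul_atTop hc
  refine h_lim.congr' ?_
  filter_upwards [eventually_gt_atTop 0] with Q hQ
  rw [sub_eq_add_neg, Real.rpow_add hQ, Real.rpow_one]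
  ring

end PowerSides

theorem count_alg_integer_points_in_rectangle_upper_general {n : ℕ} (hn : 2 ≤ n) {d₁ d₂ : ℝ}
    (hd : d₁ ≠ d₂) {ℓ₁ ℓ₂ : ℝ → ℝ} (hℓ₁ : ∀ᶠ Q in atTop, ℓ₁ Q ≤ 2)
    (hℓ₂ : ∀ᶠ Q in atTop, ℓ₂ Q ≤ 2) (hQℓ₁ : Tendsto (fun Q => Q * ℓ₁ Q) atTop atTop)
    (hQℓ₂ : Tendsto (fun Q => Q * ℓ₂ Q) atTop atTop) :
    ∀ᶠ Q : ℝ in atTop,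
      (monicRootPairs n Q ∩ Icc (d₁ - ℓ₁ Q / 2) (d₁ + ℓ₁ Q / 2) ×ˢ
        Icc (d₂ - ℓ₂ Q / 2) (d₂ + ℓ₂ Q / 2)).Finite ∧
      ((monicRootPairs n Q ∩ Icc (d₁ - ℓ₁ Q / 2) (d₁ + ℓ₁ Q / 2) ×ˢ
        Icc (d₂ - ℓ₂ Q / 2) (d₂ + ℓ₂ Q / 2)).ncard : ℝ) <
        2 ^ (3 * n + 8) * n ^ 2 * rho n d₁ * rho n d₂ * |d₁ - d₂|⁻¹ * Q ^ n * (ℓ₁ Q * ℓ₂ Q) := by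
  have hρ₁ := zero_lt_one.trans_le (one_le_rho n d₁)
  have hρ₂ := zero_lt_one.trans_le (one_le_rho n d₂)
  filter_upwards [hℓ₁, hℓ₂, hQℓ₁.eventually_ge_atTop (1 / 2), hQℓ₂.eventually_ge_atTop (1 / 2),
    hQℓ₁.eventually_ge_atTop |d₁ - d₂|, eventually_ge_atTop (1 / 2)]
    with Q hℓ₁ hℓ₂ hQℓ₁ hQℓ₂ hQD hQ
  have hQ_pos : 0 < Q := by linarith
  have hℓ₁_pos : 0 < ℓ₁ Q := pos_of_mul_pos_right (by linarith) hQ_pos.le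
  have hℓ₂_pos : 0 < ℓ₂ Q := pos_of_mul_pos_right (by linarith) hQ_pos.le
  obtain ⟨h_fin, h_card⟩ := cardLE_monicRootPairs_inter_prod hn hQ hd hℓ₁ hℓ₂ hQℓ₁ hQℓ₂
    (by linarith : |d₁ - d₂| ≤ 2 * (Q * ℓ₁ Q + Q * ℓ₂ Q))
  refine ⟨h_fin, h_card.trans_lt ?_⟩
  gcongr ?_ * _ * _ * _ * _ * _
  exact four_pow_mul_pow_four_lt (by omega)

/-- **Theorem 2.** Let `n ≥ 2`, `0 < γ₁, γ₂ < 1`, and let `Π = I₁ × I₂` be a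
rectangle with midpoint `(d₁, d₂)`, `d₁ ≠ d₂`, and side lengths `c₆ Q^{-γᵢ}`. With
`c₇ = 2^{3n+8} n² ρₙ(d₁) ρₙ(d₂) |d₁ - d₂|⁻¹` and `ρₙ(x) = ((|x|+1)^{n+1} - 1)/|x|`,
for all sufficiently large `Q` one has `#(Ã²ₙ(Q) ∩ Π) < c₇ · Qⁿ · μ₂Π`,
where `μ₂Π = c₆² Q^{-γ₁-γ₂}`. -/
theorem count_alg_integer_points_in_rectangle_upper
    (n : ℕ) (hn : 2 ≤ n) (γ₁ γ₂ : ℝ) (hγ₁ : 0 < γ₁) (hγ₁' : γ₁ < 1)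
    (hγ₂ : 0 < γ₂) (hγ₂' : γ₂ < 1)
    (d₁ d₂ : ℝ) (hd : d₁ ≠ d₂) (hd₁ : d₁ ≠ 0) (hd₂ : d₂ ≠ 0)
    (c₆ : ℝ) (hc₆ : 0 < c₆)
    (ρ : ℝ → ℝ) (hρ : ∀ x, ρ x = ((|x| + 1) ^ (n + 1) - 1) / |x|)
    (c₇ : ℝ) (hc₇ : c₇ = 2 ^ (3 * n + 8) * n ^ 2 * ρ d₁ * ρ d₂ * |d₁ - d₂|⁻¹) :
    ∃ Q₀ : ℝ, ∀ Q : ℝ, Q₀ < Q →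
      ({α : ℝ × ℝ | IsAlgebraicIntegerPoint n Q α ∧
          α.1 ∈ Set.Icc (d₁ - c₆ * Q ^ (-γ₁) / 2) (d₁ + c₆ * Q ^ (-γ₁) / 2) ∧
          α.2 ∈ Set.Icc (d₂ - c₆ * Q ^ (-γ₂) / 2) (d₂ + c₆ * Q ^ (-γ₂) / 2)}.ncard : ℝ) <
        c₇ * Q ^ (n : ℝ) * (c₆ ^ 2 * Q ^ (-γ₁ - γ₂)) := by
  obtain ⟨Q₀, h_count⟩ := eventually_atTop.mp
    (count_alg_integer_points_in_rectangle_upper_general hn hd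
      (eventually_const_mul_rpow_neg_le_two c₆ hγ₁) (eventually_const_mul_rpow_neg_le_two c₆ hγ₂)
      (tendsto_mul_const_mul_rpow_neg_atTop hc₆ hγ₁')
      (tendsto_mul_const_mul_rpow_neg_atTop hc₆ hγ₂'))
  refine ⟨max Q₀ 0, fun Q hQ => ?_⟩
  have hQ_pos : 0 < Q := (le_max_right _ _).trans_lt hQ
  have h_area : c₆ ^ 2 * Q ^ (-γ₁ - γ₂) = c₆ * Q ^ (-γ₁) * (c₆ * Q ^ (-γ₂)) := by
    rw [sub_eq_add_neg, Real.rpow_add hQ_pos]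
    ring
  rw [hc₇, hρ, hρ, ← rho_eq_div n hd₁, ← rho_eq_div n hd₂, Real.rpow_natCast, h_area]
  obtain ⟨h_fin, h_lt⟩ := h_count Q ((le_max_left _ _).trans hQ.le)
  refine (Nat.cast_le.mpr (ncard_le_ncard ?_ h_fin)).trans_lt h_lt
  exact fun α hα => ⟨hα.1.mem_monicRootPairs, hα.2⟩
end

section
/- Let p be a prime number and let a₁, …, aₙ be integers such that p does not divide a_j for at least one index j. Then for any real numbers θ₁, …, θₙ there exist integers s₁, …, sₙ with |θᵢ − sᵢ| ≤ 1 for all i, such that p does not divide s₁a₁ + … + sₙaₙ. -/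
section

variable {ι R M K : Type*} [Fintype ι]

theorem sum_add_single_smul [DecidableEq ι] [Semiring R] [AddCommMonoid M] [Module R M]
    (s : ι → R) (a : ι → M) (j : ι) (r : R) :
    ∑ i, (s + Pi.single j r : ι → R) i • a i = ∑ i, s i • a i + r • a j := by
  simp only [Pi.add_apply, add_smul, Finset.sum_add_distrib, Fintype.sum_single_smul]

variable [AddCommGroup M]

theorem exists_eq_or_eq_add_one_sum_smul_notMem [Semiring R] [Module R M]
    (H : AddSubgroup M) {a : ι → M} (ha : ∃ j, a j ∉ H) (s : ι → R) :
    ∃ t : ι → R, (∀ i, t i = s i ∨ t i = s i + 1) ∧ ∑ i, t i • a i ∉ H := by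
  classical
  obtain ⟨j, hj⟩ := ha
  by_cases hs : ∑ i, s i • a i ∈ H
  · refine ⟨s + Pi.single j 1, fun i ↦ ?_, ?_⟩
    · obtain rfl | hij := eq_or_ne i j
      · simp
      · simp [hij]
    · rwa [sum_add_single_smul, one_smul, H.add_mem_cancel_left hs]
  · exact ⟨s, fun _ ↦ .inl rfl, hs⟩

variable [Ring K] [LinearOrder K] [IsStrictOrderedRing K] [FloorRing K]

theorem abs_sub_le_one_of_eq_floor_or_eq_floor_add_one {x : K} {m : ℤ}
    (hm : m = ⌊x⌋ ∨ m = ⌊x⌋ + 1) : |x - m| ≤ 1 := by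
  obtain rfl | rfl := hm
  · rw [Int.self_sub_floor, Int.abs_fract]
    exact (Int.fract_lt_one x).le
  · rw [Int.cast_add, Int.cast_one, ← sub_sub, Int.self_sub_floor, abs_sub_comm,
      Int.abs_one_sub_fract]
    exact sub_le_self 1 (Int.fract_nonneg x)

theorem exists_integer_approx_not_dvd_general
    (H : AddSubgroup M) {a : ι → M} (ha : ∃ j, a j ∉ H) (θ : ι → K) :
    ∃ s : ι → ℤ, (∀ i, |θ i - s i| ≤ 1) ∧ ∑ i, s i • a i ∉ H := by
  obtain ⟨s, hs, hsum⟩ := exists_eq_or_eq_add_one_sum_smul_notMem H ha fun i ↦ ⌊θ i⌋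
  exact ⟨s, fun i ↦ abs_sub_le_one_of_eq_floor_or_eq_floor_add_one (hs i), hsum⟩

end

/-- Let `p` be a prime and `a₁, …, aₙ` integers with `p ∤ aⱼ` for some `j`.
Then for any reals `θ₁, …, θₙ` there are integers `s₁, …, sₙ` with `|θᵢ - sᵢ| ≤ 1` for all `i`
such that `p ∤ s₁ a₁ + … + sₙ aₙ`. -/
theorem exists_integer_approx_not_dvd
    (p : ℕ) (hp : p.Prime) (n : ℕ) (a : Fin n → ℤ)
    (ha : ∃ j, ¬ (p : ℤ) ∣ a j) (θ : Fin n → ℝ) :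
    ∃ s : Fin n → ℤ, (∀ i, |θ i - (s i : ℝ)| ≤ 1) ∧
      ¬ (p : ℤ) ∣ ∑ i, s i * a i := by
  simp only [← Int.mem_zmultiples_iff] at ha ⊢
  exact exists_integer_approx_not_dvd_general (AddSubgroup.zmultiples (p : ℤ)) ha θ
end
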